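/- For any poset P, let Γ P denote P with the Alexandroff topology, whose open sets are exactly the upper sets of P. The following are equivalent: (1) Γ P is sober; (2) Γ P is well-filtered; (3) Γ P is a d-space; (4) P is Noetherian, i.e. every directed subset of P has a greatest element; (5) P is a dcpo in which every element is compact (x ≪ x for all x ∈ P); (6) P is a dcpo and the Alexandroff topology on P coincides with the Scott topology on P. -/

import Mathlib

universe u v

open Set

/-- The specialization order on a topological space: `specLE x y` iff `x ∈ closure {y}`. -/
def specLE {X : Type*} [TopologicalSpace X] (x y : X) : Prop :=
  x ∈ closure ({y} : Set X)

/-- `a` is an upper bound of `D` with respect to the specialization order. -/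
def specUB {X : Type*} [TopologicalSpace X] (D : Set X) (a : X) : Prop :=
  ∀ d ∈ D, specLE d a

/-- `a` is a least upper bound of `D` with respect to the specialization order. -/
def specLUB {X : Type*} [TopologicalSpace X] (D : Set X) (a : X) : Prop :=
  specUB D a ∧ ∀ b, specUB D b → specLE a b

/-- `U` is Scott open with respect to the specialization order. -/
def ScottOpenSpec {X : Type*} [TopologicalSpace X] (U : Set X) : Prop :=
  (∀ x y, specLE x y → x ∈ U → y ∈ U) ∧
  ∀ D : Set X, D.Nonempty → DirectedOn specLE D → ∀ a, specLUB D a → a ∈ U →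
    (D ∩ U).Nonempty

/-- A d-space (monotone convergence space): a T0 space which is a dcpo in its
specialization order and in which every open set is Scott open with respect to
the specialization order. -/
def DSpace (X : Type*) [TopologicalSpace X] : Prop :=
  T0Space X ∧
  (∀ D : Set X, D.Nonempty → DirectedOn specLE D → ∃ a, specLUB D a) ∧
  (∀ U : Set X, IsOpen U → ScottOpenSpec U)

/-- A set is saturated if it is an intersection of open sets. -/
def Saturated {X : Type*} [TopologicalSpace X] (A : Set X) : Prop :=
  ∃ 𝒰 : Set (Set X), (∀ U ∈ 𝒰, IsOpen U) ∧ A = ⋂₀ 𝒰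

/-- A T0 space is well-filtered if every filtered (under reverse inclusion) family of
nonempty compact saturated sets whose intersection is contained in an open set `U`
has a member contained in `U`. -/
def WellFiltered (X : Type*) [TopologicalSpace X] : Prop :=
  T0Space X ∧
  ∀ 𝒦 : Set (Set X), 𝒦.Nonempty →
    (∀ K ∈ 𝒦, K.Nonempty ∧ IsCompact K ∧ Saturated K) →
    DirectedOn (fun A B => B ⊆ A) 𝒦 →
    ∀ U : Set X, IsOpen U → ⋂₀ 𝒦 ⊆ U → ∃ K ∈ 𝒦, K ⊆ U

/-- A nonempty closed set which is irreducible. -/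
def IrredClosed {X : Type*} [TopologicalSpace X] (A : Set X) : Prop :=
  A.Nonempty ∧ IsClosed A ∧
  ∀ F₁ F₂ : Set X, IsClosed F₁ → IsClosed F₂ → A ⊆ F₁ ∪ F₂ → (A ⊆ F₁ ∨ A ⊆ F₂)

/-- A space is sober if every irreducible closed set is the closure of a unique point. -/
def Sober (X : Type*) [TopologicalSpace X] : Prop :=
  ∀ A : Set X, IrredClosed A → ∃! x : X, A = closure ({x} : Set X)

/-- The specialization preorder on a topological space. -/
def specPreorder (Y : Type*) [TopologicalSpace Y] : Preorder Y where
  le := specLE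
  le_refl x := subset_closure rfl
  le_trans x y z hxy hyz :=
    closure_minimal (Set.singleton_subset_iff.mpr hyz) isClosed_closure hxy

/-- A Scott open subset of a poset: an upper set inaccessible by suprema of directed sets. -/
def IsScottOpen {P : Type*} [Preorder P] (U : Set P) : Prop :=
  IsUpperSet U ∧
  ∀ D : Set P, D.Nonempty → DirectedOn (· ≤ ·) D → ∀ a, IsLUB D a → a ∈ U →
    (D ∩ U).Nonempty

/-- The Scott topology on a poset. `Σ P` is `P` equipped with `scottTop P`. -/
def scottTop (P : Type*) [Preorder P] : TopologicalSpace P where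
  IsOpen := IsScottOpen
  isOpen_univ := by
    refine ⟨isUpperSet_univ, fun D hD _ _ _ _ => ?_⟩
    obtain ⟨d, hd⟩ := hD
    exact ⟨d, hd, trivial⟩
  isOpen_inter := by
    rintro U V ⟨hU1, hU2⟩ ⟨hV1, hV2⟩
    refine ⟨hU1.inter hV1, ?_⟩
    rintro D hne hdir a ha ⟨haU, haV⟩
    obtain ⟨d1, hd1D, hd1U⟩ := hU2 D hne hdir a ha haU
    obtain ⟨d2, hd2D, hd2V⟩ := hV2 D hne hdir a ha haV
    obtain ⟨d3, hd3D, h13, h23⟩ := hdir d1 hd1D d2 hd2D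
    exact ⟨d3, hd3D, hU1 h13 hd1U, hV1 h23 hd2V⟩
  isOpen_sUnion := by
    intro S hS
    refine ⟨isUpperSet_sUnion fun s hs => (hS s hs).1, ?_⟩
    rintro D hne hdir a ha ⟨U, hUS, haU⟩
    obtain ⟨d, hdD, hdU⟩ := (hS U hUS).2 D hne hdir a ha haU
    exact ⟨d, hdD, U, hUS, hdU⟩

/-- A dcpo: every nonempty directed subset has a least upper bound. -/
def IsDcpo (P : Type*) [Preorder P] : Prop :=
  ∀ D : Set P, D.Nonempty → DirectedOn (· ≤ ·) D → ∃ a, IsLUB D a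

/-- The way-below relation. -/
def wayBelow {P : Type*} [Preorder P] (x y : P) : Prop :=
  ∀ D : Set P, D.Nonempty → DirectedOn (· ≤ ·) D → ∀ a, IsLUB D a → y ≤ a →
    ∃ d ∈ D, x ≤ d

/-- A poset is Noetherian if every (nonempty) directed subset has a greatest member. -/
def Noetherian (P : Type*) [Preorder P] : Prop :=
  ∀ D : Set P, D.Nonempty → DirectedOn (· ≤ ·) D → ∃ m ∈ D, ∀ d ∈ D, d ≤ m

/-- An ideal: a (nonempty) directed lower set. -/
def IsIdealSet {P : Type*} [Preorder P] (I : Set P) : Prop :=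
  I.Nonempty ∧ DirectedOn (· ≤ ·) I ∧ IsLowerSet I

/-- The Alexandroff topology on a poset: the open sets are the upper sets. -/
def alexTop (P : Type*) [Preorder P] : TopologicalSpace P where
  IsOpen := IsUpperSet
  isOpen_univ := isUpperSet_univ
  isOpen_inter _ _ := IsUpperSet.inter
  isOpen_sUnion _ h := isUpperSet_sUnion h

/-- The space `X_⊤` obtained from `X` by adjoining a new top point `⊤` (here `none`):
the closed sets are the closed sets of `X` together with the whole space. -/
def topTop (X : Type*) [TopologicalSpace X] : TopologicalSpace (Option X) where
  IsOpen V := V = ∅ ∨ ∃ U : Set X, IsOpen U ∧ V = insert none (some '' U)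
  isOpen_univ := by
    refine Or.inr ⟨Set.univ, isOpen_univ, ?_⟩
    ext (_ | a) <;> simp
  isOpen_inter := by
    rintro V W (rfl | ⟨U₁, hU₁, rfl⟩) hW
    · exact Or.inl (by simp)
    rcases hW with rfl | ⟨U₂, hU₂, rfl⟩
    · exact Or.inl (by simp)
    · refine Or.inr ⟨U₁ ∩ U₂, hU₁.inter hU₂, ?_⟩
      ext (_ | a) <;> simp
  isOpen_sUnion := by
    classical
    intro S hS
    by_cases h0 : ⋃₀ S = ∅
    · exact Or.inl h0
    · refine Or.inr ⟨{x : X | some x ∈ ⋃₀ S}, ?_, ?_⟩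
      · have h1 : {x : X | some x ∈ ⋃₀ S} = ⋃ V ∈ S, some ⁻¹' V := by
          ext x; simp [Set.mem_sUnion]
        rw [h1]
        refine isOpen_biUnion fun V hV => ?_
        rcases hS V hV with rfl | ⟨U, hU, rfl⟩
        · rw [Set.preimage_empty]; exact isOpen_empty
        · have h2 : (some ⁻¹' (insert none (some '' U)) : Set X) = U := by
            ext x; simp
          rw [h2]; exact hU
      · have hnone : (none : Option X) ∈ ⋃₀ S := by
          obtain ⟨v, V, hVS, hvV⟩ := Set.nonempty_iff_ne_empty.mpr h0
          rcases hS V hVS with rfl | ⟨U, hU, rfl⟩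
          · exact absurd hvV (by simp)
          · exact ⟨_, hVS, by simp⟩
        ext (_ | a)
        · simp only [Set.mem_insert_iff, true_or, iff_true]
          exact hnone
        · simp [Set.mem_sUnion]

/-- A `𝐊`-set of a space `X` (relative to a class `K` of spaces): a set whose image
under any continuous map to a `𝐊`-space has the closure of a unique point as closure. -/
def IsKSet (K : (Y : Type u) → TopologicalSpace Y → Prop)
    (X : Type u) [tX : TopologicalSpace X] (A : Set X) : Prop :=
  ∀ (Y : Type u) (tY : TopologicalSpace Y), K Y tY →
    ∀ f : X → Y, @Continuous X Y tX tY f →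
      ∃! y : Y, @closure Y tY (f '' A) = @closure Y tY {y}

/-- `𝐊(X)`: the collection of closed `𝐊`-sets of `X`. -/
def KSets (K : (Y : Type u) → TopologicalSpace Y → Prop)
    (X : Type u) [TopologicalSpace X] : Set (Set X) :=
  {A : Set X | IsClosed A ∧ IsKSet K X A}

/-- The lower Vietoris topology on a family `G` of subsets of `X`, generated by the
sets `◊U = {A ∈ G | A ∩ U ≠ ∅}` for `U` open. -/
def lowerVietoris {X : Type*} [TopologicalSpace X] (G : Set (Set X)) :
    TopologicalSpace ↥G :=
  TopologicalSpace.generateFrom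
    {S : Set ↥G | ∃ U : Set X, IsOpen U ∧ S = {A : ↥G | ((A : Set X) ∩ U).Nonempty}}

/-- A class `K` of spaces is adequate if `P_H(𝐊(X))` is a `𝐊`-space for every T0 space `X`. -/
def Adequate (K : (Y : Type u) → TopologicalSpace Y → Prop) : Prop :=
  ∀ (X : Type u) (tX : TopologicalSpace X), @T0Space X tX →
    K ↥(@KSets K X tX) (@lowerVietoris X tX (@KSets K X tX))

/-- `⟨Z, η⟩` is a `𝐊`-reflection of `X`. -/
def IsKReflection (K : (Y : Type u) → TopologicalSpace Y → Prop)
    (X : Type u) (tX : TopologicalSpace X)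
    (Z : Type u) (tZ : TopologicalSpace Z) (η : X → Z) : Prop :=
  K Z tZ ∧ @Continuous X Z tX tZ η ∧
  ∀ (Y : Type u) (tY : TopologicalSpace Y), K Y tY →
    ∀ f : X → Y, @Continuous X Y tX tY f →
      ∃! g : Z → Y, @Continuous Z Y tZ tY g ∧ g ∘ η = f

/-- The carrier of the Johnstone poset `𝕁 = ℕ × (ℕ ∪ {ω})`. -/
structure Johnstone where
  fst : ℕ
  snd : WithTop ℕ

/-- The Johnstone order: `(j, k) ≤ (m, n)` iff `j = m` and `k ≤ n`, or `n = ω` and `k ≤ m`. -/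
instance : PartialOrder Johnstone where
  le p q := (p.fst = q.fst ∧ p.snd ≤ q.snd) ∨ (q.snd = ⊤ ∧ p.snd ≤ (q.fst : WithTop ℕ))
  le_refl p := Or.inl ⟨rfl, le_rfl⟩
  le_trans p q r hpq hqr := by
    rcases hpq with ⟨h1, h2⟩ | ⟨h1, h2⟩ <;> rcases hqr with ⟨h3, h4⟩ | ⟨h3, h4⟩
    · exact Or.inl ⟨h1.trans h3, h2.trans h4⟩
    · exact Or.inr ⟨h3, h2.trans h4⟩
    · have hr : r.snd = ⊤ := top_le_iff.mp (h1 ▸ h4)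
      exact Or.inr ⟨hr, h3 ▸ h2⟩
    · rw [h1] at h4
      exact absurd h4 (by simp)
  le_antisymm p q hpq hqp := by
    obtain ⟨pf, ps⟩ := p
    obtain ⟨qf, qs⟩ := q
    rcases hpq with ⟨h1, h2⟩ | ⟨h1, h2⟩ <;> rcases hqp with ⟨h3, h4⟩ | ⟨h3, h4⟩
    · dsimp at *
      cases h1
      cases le_antisymm h2 h4
      rfl
    · dsimp at *
      rw [h3] at h2
      rw [top_le_iff.mp h2] at h4
      exact absurd h4 (by simp)
    · dsimp at *
      rw [h1] at h4
      rw [top_le_iff.mp h4] at h2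
      exact absurd h2 (by simp)
    · dsimp at *
      rw [h3] at h2
      exact absurd h2 (by simp)

/-- The class of d-spaces. -/
def dClass : (Y : Type u) → TopologicalSpace Y → Prop := fun Y tY => @DSpace Y tY

/-- The class of well-filtered spaces. -/
def wfClass : (Y : Type u) → TopologicalSpace Y → Prop := fun Y tY => @WellFiltered Y tY

/-- The class of sober spaces. -/
def soberClass : (Y : Type u) → TopologicalSpace Y → Prop := fun Y tY => @Sober Y tY

/-!
A minimal closed set meeting every member of a filtered family of compact sets is irreducible
(the topological Rudin lemma). In a sober space it therefore has a generic point, which lies in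
every saturated member of the family: sober spaces are well-filtered. In a well-filtered space, an
open set containing all upper bounds of a directed set `D` meets `D`; applied to the complement of
`closure D`, this puts an upper bound of `D`, necessarily the least one, into `closure D`.

In an Alexandroff space every `Ici x` is open, so being a d-space forces `Ici x` to be Scott open,
which says that `x` is compact. A directed set in a dcpo whose supremum is compact contains it.
Finally, irreducible sets of an Alexandroff space are directed, so a greatest element of one that is
closed is a generic point.
-/

section TopologicalSpace

variable {X : Type*} [TopologicalSpace X]

theorem specLE_iff_specializes {x y : X} : specLE x y ↔ y ⤳ x :=
  specializes_iff_mem_closure.symm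

theorem saturated_nhdsKer (s : Set X) : Saturated (nhdsKer s) :=
  ⟨{U | IsOpen U ∧ s ⊆ U}, fun _ hU => hU.1, nhdsKer_def s⟩

theorem Saturated.mem_of_specLE {A : Set X} (hA : Saturated A) {x y : X} (hxy : specLE x y)
    (hx : x ∈ A) : y ∈ A := by
  obtain ⟨𝒰, h𝒰, rfl⟩ := hA
  exact fun U hU => (specLE_iff_specializes.1 hxy).mem_open (h𝒰 U hU) (hx U hU)

theorem irredClosed_iff {A : Set X} : IrredClosed A ↔ IsIrreducible A ∧ IsClosed A := by
  rw [IrredClosed, IsIrreducible, isPreirreducible_iff_isClosed_union_isClosed]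
  tauto

theorem Sober.t0Space (h : Sober X) : T0Space X := by
  refine ⟨fun x y hxy => ?_⟩
  have hirr : IrredClosed (closure {x}) :=
    irredClosed_iff.2 ⟨isIrreducible_singleton.closure, isClosed_closure⟩
  exact (h _ hirr).unique rfl (inseparable_iff_closure_eq.1 hxy)

/-- A closed set meeting every member of the family `𝒦`; the minimal ones are the irreducible sets
produced by the topological Rudin lemma. -/
def ClosedTransversal (𝒦 : Set (Set X)) (C : Set X) : Prop :=
  IsClosed C ∧ ∀ K ∈ 𝒦, (K ∩ C).Nonempty

theorem ClosedTransversal.sInter_of_isChain {𝒦 c : Set (Set X)} (h𝒦 : ∀ K ∈ 𝒦, IsCompact K)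
    (hc : ∀ C ∈ c, ClosedTransversal 𝒦 C) (hchain : IsChain (· ⊆ ·) c) (hne : c.Nonempty) :
    ClosedTransversal 𝒦 (⋂₀ c) := by
  refine ⟨isClosed_sInter fun C hC => (hc C hC).1, fun K hK => ?_⟩
  have : Nonempty c := hne.to_subtype
  have hdir : DirectedOn (· ⊇ ·) c := IsChain.directedOn hchain.symm
  by_contra hempty
  rw [not_nonempty_iff_eq_empty, sInter_eq_iInter] at hempty
  obtain ⟨⟨C, hC⟩, hKC⟩ := (h𝒦 K hK).elim_directed_family_closed _
    (fun C : c => (hc C C.2).1) hempty hdir.directed_val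
  exact ((hc C hC).2 K hK).ne_empty hKC

theorem ClosedTransversal.exists_minimal_subset {𝒦 : Set (Set X)} {C₀ : Set X}
    (h𝒦 : ∀ K ∈ 𝒦, IsCompact K) (hC₀ : ClosedTransversal 𝒦 C₀) :
    ∃ C ⊆ C₀, Minimal (ClosedTransversal 𝒦) C :=
  zorn_superset_nonempty {C | ClosedTransversal 𝒦 C}
    (fun c hc hchain hne =>
      ⟨⋂₀ c, .sInter_of_isChain h𝒦 hc hchain hne, fun _ => sInter_subset_of_mem⟩)
    C₀ hC₀

theorem irredClosed_of_minimal_closedTransversal {𝒦 : Set (Set X)} {C : Set X} (hne : 𝒦.Nonempty)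
    (hdir : DirectedOn (· ⊇ ·) 𝒦) (hC : Minimal (ClosedTransversal 𝒦) C) : IrredClosed C := by
  obtain ⟨hclosed, hmeets⟩ := hC.prop
  have exists_disjoint {F : Set X} (hF : IsClosed F) (hCF : ¬C ⊆ F) :
      ∃ K ∈ 𝒦, Disjoint K (C ∩ F) := by
    by_contra! hmeetsF
    have hCF' : ClosedTransversal 𝒦 (C ∩ F) :=
      ⟨hclosed.inter hF, fun K hK => not_disjoint_iff_nonempty_inter.1 (hmeetsF K hK)⟩
    exact hCF ((hC.le_of_le hCF' inter_subset_left).trans inter_subset_right)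
  refine ⟨?_, hclosed, fun F₁ F₂ hF₁ hF₂ hcover => ?_⟩
  · obtain ⟨K, hK⟩ := hne
    exact (hmeets K hK).right
  · by_contra! hnot
    obtain ⟨K₁, hK₁, hdisj₁⟩ := exists_disjoint hF₁ hnot.1
    obtain ⟨K₂, hK₂, hdisj₂⟩ := exists_disjoint hF₂ hnot.2
    obtain ⟨K, hK, hKK₁, hKK₂⟩ := hdir K₁ hK₁ K₂ hK₂
    obtain ⟨x, hxK, hxC⟩ := hmeets K hK
    rcases hcover hxC with hxF | hxF
    · exact disjoint_left.1 hdisj₁ (hKK₁ hxK) ⟨hxC, hxF⟩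
    · exact disjoint_left.1 hdisj₂ (hKK₂ hxK) ⟨hxC, hxF⟩

theorem Sober.wellFiltered (h : Sober X) : WellFiltered X := by
  refine ⟨h.t0Space, fun 𝒦 hne h𝒦 hdir U hU hsub => ?_⟩
  by_contra! hnot
  have hUc : ClosedTransversal 𝒦 Uᶜ :=
    ⟨hU.isClosed_compl, fun K hK => inter_compl_nonempty_iff.2 (hnot K hK)⟩
  obtain ⟨C, hCU, hC⟩ := hUc.exists_minimal_subset fun K hK => (h𝒦 K hK).2.1
  obtain ⟨x, rfl, -⟩ := h C (irredClosed_of_minimal_closedTransversal hne hdir hC)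
  have hx : x ∈ ⋂₀ 𝒦 := fun K hK => by
    obtain ⟨y, hyK, hyx⟩ := hC.prop.2 K hK
    exact (h𝒦 K hK).2.2.mem_of_specLE hyx hyK
  exact hCU (subset_closure rfl) (hsub hx)

theorem specLUB_of_mem_closure {D : Set X} {a : X} (ha : specUB D a) (haD : a ∈ closure D) :
    specLUB D a :=
  ⟨ha, fun _ hb => closure_minimal hb isClosed_closure haD⟩

theorem WellFiltered.inter_nonempty_of_specUB_subset (h : WellFiltered X) {D U : Set X}
    (hne : D.Nonempty) (hdir : DirectedOn specLE D) (hU : IsOpen U) (hDU : {a | specUB D a} ⊆ U) :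
    (D ∩ U).Nonempty := by
  have hker : ∀ K ∈ (fun d => nhdsKer {d}) '' D, K.Nonempty ∧ IsCompact K ∧ Saturated K := by
    rintro _ ⟨d, -, rfl⟩
    exact ⟨⟨d, subset_nhdsKer rfl⟩, isCompact_singleton.nhdsKer, saturated_nhdsKer _⟩
  have hfiltered : DirectedOn (fun A B => B ⊆ A) ((fun d => nhdsKer {d}) '' D) :=
    directedOn_image.2 <| hdir.mono fun _ _ hde =>
      specializes_iff_nhdsKer_subset.1 (specLE_iff_specializes.1 hde)
  have hsub : ⋂₀ ((fun d => nhdsKer {d}) '' D) ⊆ U := fun a ha => hDU fun d hd =>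
    specLE_iff_specializes.2 (mem_nhdsKer_singleton.1 (ha _ (mem_image_of_mem _ hd)))
  obtain ⟨_, ⟨d, hd, rfl⟩, hdU⟩ := h.2 _ (hne.image _) hker hfiltered U hU hsub
  exact ⟨d, hd, hdU (subset_nhdsKer rfl)⟩

theorem WellFiltered.exists_specLUB (h : WellFiltered X) {D : Set X} (hne : D.Nonempty)
    (hdir : DirectedOn specLE D) : ∃ a, specLUB D a := by
  obtain ⟨a, ha, haD⟩ : ∃ a, specUB D a ∧ a ∈ closure D := by
    by_contra! hnot
    obtain ⟨d, hd, hdcl⟩ :=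
      h.inter_nonempty_of_specUB_subset hne hdir isClosed_closure.isOpen_compl hnot
    exact hdcl (subset_closure hd)
  exact ⟨a, specLUB_of_mem_closure ha haD⟩

theorem WellFiltered.dSpace (h : WellFiltered X) : DSpace X := by
  refine ⟨h.1, fun D => h.exists_specLUB, fun U hU => ⟨fun x y hxy hx => ?_, ?_⟩⟩
  · exact (specLE_iff_specializes.1 hxy).mem_open hU hx
  · intro D hne hdir a ha haU
    exact h.inter_nonempty_of_specUB_subset hne hdir hU fun b hb =>
      (specLE_iff_specializes.1 (ha.2 b hb)).mem_open hU haU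

end TopologicalSpace

section Order

variable {P : Type*} [Preorder P]

theorem wayBelow_self_iff_isScottOpen_Ici {x : P} : wayBelow x x ↔ IsScottOpen (Ici x) :=
  ⟨fun h => ⟨isUpperSet_Ici x, h⟩, fun h => h.2⟩

theorem IsDcpo.noetherian (h : IsDcpo P) (hcompact : ∀ x : P, wayBelow x x) : Noetherian P := by
  intro D hne hdir
  obtain ⟨a, ha⟩ := h D hne hdir
  obtain ⟨d, hd, had⟩ := hcompact a D hne hdir a ha le_rfl
  exact ⟨d, hd, fun e he => (ha.1 he).trans had⟩

theorem alexTop_eq_scottTop_iff :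
    alexTop P = scottTop P ↔ ∀ U : Set P, IsUpperSet U → IsScottOpen U := by
  rw [TopologicalSpace.ext_iff]
  exact forall_congr' fun U => ⟨Iff.mp, fun h => ⟨h, And.left⟩⟩

variable [TopologicalSpace P]

theorem specLUB_iff_isLUB (hspec : (specLE : P → P → Prop) = (· ≤ ·)) {D : Set P} {a : P} :
    specLUB D a ↔ IsLUB D a := by
  simp only [specLUB, specUB, hspec]
  rfl

theorem DSpace.isDcpo (h : DSpace P) (hspec : (specLE : P → P → Prop) = (· ≤ ·)) : IsDcpo P := by
  intro D hne hdir
  obtain ⟨a, ha⟩ := h.2.1 D hne (hspec ▸ hdir)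
  exact ⟨a, (specLUB_iff_isLUB hspec).1 ha⟩

theorem DSpace.isScottOpen (h : DSpace P) (hspec : (specLE : P → P → Prop) = (· ≤ ·)) {U : Set P}
    (hU : IsOpen U) : IsScottOpen U := by
  obtain ⟨hupper, hinaccessible⟩ := h.2.2 U hU
  rw [hspec] at hupper hinaccessible
  exact ⟨hupper, fun D hne hdir a ha =>
    hinaccessible D hne hdir a ((specLUB_iff_isLUB hspec).2 ha)⟩

end Order

section Alexandroff

variable {P : Type*} [TopologicalSpace P]

theorem specLE_eq_le [Preorder P] [Topology.IsUpperSet P] :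
    (specLE : P → P → Prop) = (· ≤ ·) := by
  ext x y
  rw [specLE, Topology.IsUpperSet.closure_singleton, mem_Iic]

theorem directedOn_of_isPreirreducible [Preorder P] [Topology.IsUpperSet P] {A : Set P}
    (hA : IsPreirreducible A) : DirectedOn (· ≤ ·) A := by
  intro x hx y hy
  have isOpen_Ici (z : P) : IsOpen (Ici z) :=
    Topology.IsUpperSet.isOpen_iff_isUpperSet.2 (isUpperSet_Ici z)
  obtain ⟨z, hz, hxz, hyz⟩ :=
    hA (Ici x) (Ici y) (isOpen_Ici x) (isOpen_Ici y) ⟨x, hx, self_mem_Ici⟩ ⟨y, hy, self_mem_Ici⟩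
  exact ⟨z, hz, hxz, hyz⟩

theorem Noetherian.sober [PartialOrder P] [Topology.IsUpperSet P] (h : Noetherian P) :
    Sober P := by
  intro A hA
  obtain ⟨hirr, hclosed⟩ := irredClosed_iff.1 hA
  obtain ⟨m, hm, hmax⟩ := h A hirr.1 (directedOn_of_isPreirreducible hirr.2)
  have hlower : IsLowerSet A := Topology.IsUpperSet.isClosed_iff_isLower.1 hclosed
  have hAm : A = Iic m := Subset.antisymm hmax fun _ hx => hlower hx hm
  simp only [Topology.IsUpperSet.closure_singleton, hAm]
  exact ⟨m, rfl, fun _ hx => (Iic_injective hx).symm⟩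

end Alexandroff

/-- For a poset `P` with the Alexandroff topology `Γ P`, the following are
equivalent: `Γ P` is sober; `Γ P` is well-filtered; `Γ P` is a d-space; `P` is Noetherian;
`P` is a dcpo with every element compact; `P` is a dcpo whose Alexandroff topology is its
Scott topology. -/
theorem stmt18 (P : Type u) [PartialOrder P] :
    List.TFAE [
      @Sober P (alexTop P),
      @WellFiltered P (alexTop P),
      @DSpace P (alexTop P),
      Noetherian P,
      IsDcpo P ∧ ∀ x : P, wayBelow x x,
      IsDcpo P ∧ alexTop P = scottTop P] := by
  let _ : TopologicalSpace P := alexTop P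
  have : Topology.IsUpperSet P := ⟨rfl⟩
  tfae_have 1 → 2 := Sober.wellFiltered
  tfae_have 2 → 3 := WellFiltered.dSpace
  tfae_have 3 → 6 := fun h =>
    ⟨h.isDcpo specLE_eq_le, alexTop_eq_scottTop_iff.2 fun _ hU => h.isScottOpen specLE_eq_le hU⟩
  tfae_have 6 → 5 := fun ⟨hdcpo, htop⟩ =>
    ⟨hdcpo, fun x => wayBelow_self_iff_isScottOpen_Ici.2
      (alexTop_eq_scottTop_iff.1 htop (Ici x) (isUpperSet_Ici x))⟩
  tfae_have 5 → 4 := fun ⟨hdcpo, hcompact⟩ => hdcpo.noetherian hcompact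
  tfae_have 4 → 1 := Noetherian.sober
  tfae_finish
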